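/- arXiv:2006.04169 — 2 statements merged into one kernel-verified Lean document; each statement's English description precedes it below -/
import Mathlib

section
/- Let n ≥ 1, let f : ℝⁿ → ℂ be a Schwartz function, and fix an index k with 1 ≤ k ≤ n. Then (∫_{ℝⁿ} |x_k|² |f(x)|² dx)^{1/2} · (∫_{ℝⁿ} |∂_{x_k} f(x)|² dx)^{1/2} ≥ (1/2) ∫_{ℝⁿ} |f(x)|² dx. That is, ‖x_k f‖_{L²} · ‖∂_{x_k} f‖_{L²} ≥ (1/2) ‖f‖_{L²}², where x_k f denotes the function x ↦ x_k · f(x) and ∂_{x_k} f denotes the k-th partial derivative of f. -/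
open MeasureTheory

/-- Position–momentum Heisenberg uncertainty inequality for Schwartz functions on `ℝⁿ`:
`‖x_k f‖_{L²} * ‖∂_{x_k} f‖_{L²} ≥ (1/2) * ‖f‖_{L²}²`. -/
theorem sharp_clifford_stmt1 {n : ℕ} (hn : 1 ≤ n)
    (f : SchwartzMap (EuclideanSpace ℝ (Fin n)) ℂ) (k : Fin n) :
    Real.sqrt (∫ x : EuclideanSpace ℝ (Fin n), |x k| ^ 2 * ‖f x‖ ^ 2) *
      Real.sqrt (∫ x : EuclideanSpace ℝ (Fin n),
        ‖fderiv ℝ (⇑f) x (EuclideanSpace.single k 1)‖ ^ 2)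
    ≥ (1 / 2) * ∫ x : EuclideanSpace ℝ (Fin n), ‖f x‖ ^ 2 := by
  set v : EuclideanSpace ℝ (Fin n) := EuclideanSpace.single k 1 with hv
  let p : EuclideanSpace ℝ (Fin n) →L[ℝ] ℝ := EuclideanSpace.proj k
  have hp : ∀ x, p x = x k := fun x => rfl
  have hpv : p v = 1 := by simp [hp, hv]
  have hpt : Function.HasTemperateGrowth (fun x => p x) := p.hasTemperateGrowth
  let g : SchwartzMap (EuclideanSpace ℝ (Fin n)) ℂ := SchwartzMap.smulLeftCLM ℂ (fun x => p x) f
  have hg : ∀ x, g x = p x • f x := fun x => SchwartzMap.smulLeftCLM_apply_apply hpt f x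
  let h : SchwartzMap (EuclideanSpace ℝ (Fin n)) ℂ := LineDeriv.lineDerivOp v f
  have hh : ∀ x, h x = fderiv ℝ f x v := fun x => SchwartzMap.lineDerivOp_apply_eq_fderiv v f x
  have hg' : ∀ x, LineDeriv.lineDerivOp v g x = f x + p x • h x := by
    intro x
    rw [SchwartzMap.lineDerivOp_apply_eq_fderiv, hh]
    have e : (g : EuclideanSpace ℝ (Fin n) → ℂ) = fun x => p x • f x := funext hg
    have := (p.hasFDerivAt (x := x)).smul (f.differentiableAt (x := x)).hasFDerivAt
    have e2 := this.fderiv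
    rw [e]
    erw [e2]
    simp [hpv, add_comm]
  have ip := SchwartzMap.integral_bilinear_lineDerivOp_right_eq_neg_left (μ := volume) g f
    (innerSL ℝ : ℂ →L[ℝ] ℂ →L[ℝ] ℝ) v
  have hI : ∀ a b : SchwartzMap (EuclideanSpace ℝ (Fin n)) ℂ,
      Integrable (fun x => inner ℝ (a x) (b x)) := fun a b =>
    (SchwartzMap.bilinLeftCLM (innerSL ℝ : ℂ →L[ℝ] ℂ →L[ℝ] ℝ) b.hasTemperateGrowth a).integrable
  have key : ∫ x, ‖f x‖ ^ 2 = -2 * ∫ x, inner ℝ (g x) (h x) := by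
    have e : ∀ x, innerSL ℝ (LineDeriv.lineDerivOp v g x) (f x)
        = inner ℝ (f x) (f x) + inner ℝ (g x) (h x) := by
      intro x
      rw [hg', hg, innerSL_apply_apply, inner_add_left, real_inner_smul_left,
        real_inner_smul_left, real_inner_comm (f x) (h x)]
    simp_rw [e] at ip
    rw [integral_add (hI f f) (hI g h)] at ip
    simp_rw [real_inner_self_eq_norm_sq] at ip
    have ip' : ∫ x, inner ℝ (g x) (h x) = -((∫ x, ‖f x‖ ^ 2) + ∫ x, inner ℝ (g x) (h x)) := ip
    linarith
  have cs := integral_mul_norm_le_Lp_mul_Lq (μ := volume) Real.HolderConjugate.two_two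
    (g.memLp (ENNReal.ofReal 2)) (h.memLp (ENNReal.ofReal 2))
  have b : -∫ x, inner ℝ (g x) (h x) ≤ ∫ x, ‖g x‖ * ‖h x‖ := by
    rw [← integral_neg]
    refine integral_mono (hI g h).neg ?_ ?_
    · exact (g.memLp 2).norm.integrable_mul (h.memLp 2).norm
    · intro x
      exact (neg_le_abs _).trans (abs_real_inner_le_norm _ _)
  simp only [Real.rpow_two, ← Real.sqrt_eq_rpow] at cs
  have e1 : ∀ x, ‖g x‖ ^ 2 = |x k| ^ 2 * ‖f x‖ ^ 2 := by
    intro x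
    rw [hg, norm_smul, mul_pow, hp, Real.norm_eq_abs]
  simp_rw [e1, hh] at cs
  simp_rw [hh] at b key
  rw [key]
  linarith
end

section
/- Let n ≥ 1, let f : ℝⁿ → ℂ be a Schwartz function, fix an index k with 1 ≤ k ≤ n, and let 𝓕f denote the Fourier transform of f with the convention 𝓕f(ξ) = ∫_{ℝⁿ} e^{−2πi⟨x,ξ⟩} f(x) dx. Then (∫_{ℝⁿ} |x_k|² |f(x)|² dx)^{1/2} · (∫_{ℝⁿ} |ξ_k|² |𝓕f(ξ)|² dξ)^{1/2} ≥ (1/(4π)) ∫_{ℝⁿ} |f(x)|² dx. Equivalently, ‖x_k f‖_{L²} · ‖ξ_k 𝓕f‖_{L²} ≥ (1/(4π)) ‖f‖_{L²}². -/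
open MeasureTheory
open scoped FourierTransform

open scoped LineDeriv in
theorem heis_aux {n : ℕ} (f : SchwartzMap (EuclideanSpace ℝ (Fin n)) ℂ) (k : Fin n) :
    ∫ x : EuclideanSpace ℝ (Fin n), ‖f x‖ ^ 2 ≤
      2 * (Real.sqrt (∫ x : EuclideanSpace ℝ (Fin n), |x k| ^ 2 * ‖f x‖ ^ 2) *
      Real.sqrt (∫ x : EuclideanSpace ℝ (Fin n),
        ‖(∂_{EuclideanSpace.single k (1:ℝ)} f) x‖ ^ 2)) := by
  set m : EuclideanSpace ℝ (Fin n) := EuclideanSpace.single k (1:ℝ) with hm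
  have hT : (fun x : EuclideanSpace ℝ (Fin n) => inner ℝ x m).HasTemperateGrowth :=
    ((innerSL ℝ).flip m).hasTemperateGrowth
  set g := SchwartzMap.smulLeftCLM ℂ (fun x : EuclideanSpace ℝ (Fin n) => inner ℝ x m) f with hg
  have hin : ∀ x : EuclideanSpace ℝ (Fin n), inner ℝ x m = x k := by
    intro x; simp [hm, EuclideanSpace.inner_single_right]
  have hgx : ∀ x, g x = (x k) • f x := by
    intro x; rw [hg, SchwartzMap.smulLeftCLM_apply_apply hT, hin]
  have hdg : ∀ x, (∂_{m} g) x = f x + (x k) • (∂_{m} f) x := by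
    intro x
    rw [SchwartzMap.lineDerivOp_apply_eq_fderiv, SchwartzMap.lineDerivOp_apply_eq_fderiv]
    have h1 : (g : EuclideanSpace ℝ (Fin n) → ℂ) = fun x => (EuclideanSpace.proj k : _ →L[ℝ] ℝ) x • f x := by
      ext y; rw [hgx]; rfl
    rw [h1, fderiv_fun_smul (EuclideanSpace.proj k : _ →L[ℝ] ℝ).differentiableAt f.differentiableAt,
      ContinuousLinearMap.fderiv]
    simp [hm, add_comm]
  have hi1 : Integrable (fun x => ‖f x‖ ^ 2) (volume : Measure (EuclideanSpace ℝ (Fin n))) :=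
    (f.memLp 2).integrable_norm_pow (by norm_num)
  have hgm := g.memLp 2 (μ := volume)
  have hdm := (∂_{m} f).memLp 2 (μ := volume)
  have hi2 : Integrable (fun x => inner ℝ (g x) ((∂_{m} f) x))
      (volume : Measure (EuclideanSpace ℝ (Fin n))) :=
    (SchwartzMap.pairing (innerSL ℝ) g (∂_{m} f)).integrable
  have hi3 : Integrable (fun x => ‖g x‖ * ‖(∂_{m} f) x‖)
      (volume : Measure (EuclideanSpace ℝ (Fin n))) :=
    hgm.norm.integrable_mul hdm.norm
  have ibp : ∫ x, inner ℝ (g x) ((∂_{m} f) x) = -∫ x, inner ℝ ((∂_{m} g) x) (f x) :=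
    SchwartzMap.integral_bilinear_lineDerivOp_right_eq_neg_left
    (μ := (volume : Measure (EuclideanSpace ℝ (Fin n)))) g f (innerSL ℝ) m
  have h2 : ∀ x, inner ℝ ((∂_{m} g) x) (f x) = ‖f x‖ ^ 2 + inner ℝ (g x) ((∂_{m} f) x) := by
    intro x
    rw [hdg, hgx, inner_add_left, real_inner_self_eq_norm_sq, real_inner_smul_left,
      real_inner_smul_left, real_inner_comm]
  simp only [h2] at ibp
  rw [integral_add hi1 hi2] at ibp
  have h3 : -(∫ x, inner ℝ (g x) ((∂_{m} f) x)) ≤ ∫ x, ‖g x‖ * ‖(∂_{m} f) x‖ := by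
    rw [← integral_neg]
    refine integral_mono hi2.neg hi3 fun x => ?_
    exact (neg_le_abs _).trans (abs_real_inner_le_norm _ _)
  have h4 := integral_mul_norm_le_Lp_mul_Lq (μ := volume) Real.HolderConjugate.two_two
    (f := g) (g := fun x => (∂_{m} f) x) (by simpa using hgm) (by simpa using hdm)
  simp only [Real.rpow_two, ← Real.sqrt_eq_rpow] at h4
  have h5 : ∀ x, ‖g x‖ ^ 2 = |x k| ^ 2 * ‖f x‖ ^ 2 := by
    intro x; rw [hgx, norm_smul, mul_pow, Real.norm_eq_abs]
  simp only [h5] at h4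
  linarith

/-- Heisenberg uncertainty inequality for the Fourier transform (with the
`e^{-2πi⟨x,ξ⟩}` convention): `‖x_k f‖_{L²} * ‖ξ_k 𝓕f‖_{L²} ≥ (1/(4π)) * ‖f‖_{L²}²`. -/
theorem sharp_clifford_stmt2 {n : ℕ} (hn : 1 ≤ n)
    (f : SchwartzMap (EuclideanSpace ℝ (Fin n)) ℂ) (k : Fin n) :
    Real.sqrt (∫ x : EuclideanSpace ℝ (Fin n), |x k| ^ 2 * ‖f x‖ ^ 2) *
      Real.sqrt (∫ ξ : EuclideanSpace ℝ (Fin n), |ξ k| ^ 2 * ‖𝓕 (⇑f) ξ‖ ^ 2)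
    ≥ (1 / (4 * Real.pi)) * ∫ x : EuclideanSpace ℝ (Fin n), ‖f x‖ ^ 2 := by
  have h := heis_aux f k
  rw [← SchwartzMap.integral_norm_sq_fourier (LineDeriv.lineDerivOp _ f),
    SchwartzMap.fourier_lineDerivOp_eq] at h
  have hT : (fun x : EuclideanSpace ℝ (Fin n) =>
      inner ℝ x (EuclideanSpace.single k (1:ℝ))).HasTemperateGrowth :=
    ((innerSL ℝ).flip (EuclideanSpace.single k (1:ℝ))).hasTemperateGrowth
  have e : ∀ x, ‖((2 * Real.pi * Complex.I) • SchwartzMap.smulLeftCLM ℂ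
      (fun x : EuclideanSpace ℝ (Fin n) => inner ℝ x (EuclideanSpace.single k (1:ℝ))) (𝓕 f)) x‖ ^ 2
      = (2 * Real.pi) ^ 2 * (|x k| ^ 2 * ‖𝓕 (⇑f) x‖ ^ 2) := by
    intro x
    rw [SchwartzMap.smul_apply, SchwartzMap.smulLeftCLM_apply_apply hT, norm_smul, norm_smul,
      SchwartzMap.fourier_coe, mul_pow, mul_pow]
    simp [EuclideanSpace.inner_single_right, mul_pow]
  simp only [e] at h
  rw [integral_const_mul, Real.sqrt_mul (by positivity), Real.sqrt_sq (by positivity)] at h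
  rw [ge_iff_le, one_div, inv_mul_le_iff₀ (by positivity)]
  linarith
end
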